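/- Let s=[a_1,…,a_P] be any period, i.e., a finite sequence of positive integers that is not the concatenation of several copies of a shorter block. Then: (1) there exists a primitive integer binary quadratic form f with positive nonsquare discriminant such that Γ(f)=s; (2) if f and g are two primitive integer forms with positive nonsquare discriminants such that Γ(f) and Γ(g) are equal up to cyclic permutation, then g is SL(2,ℤ)-equivalent either to f or to the antipodal form of f. -/

import Mathlib

/-- Iterates of the Gauss map starting from `ξ`. -/
noncomputable def gaussIter (ξ : ℝ) : ℕ → ℝ
  | 0 => ξ
  | n + 1 => 1 / (gaussIter ξ n - (⌊gaussIter ξ n⌋ : ℝ))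

/-- The `n`-th partial quotient of the regular continued fraction expansion of `ξ`. -/
noncomputable def cfTerm (ξ : ℝ) (n : ℕ) : ℤ := ⌊gaussIter ξ n⌋

/-- The continued fraction expansion of `ξ` is periodic with period length `P` from index `N`. -/
def IsEventuallyPeriodicCF (ξ : ℝ) (N P : ℕ) : Prop :=
  1 ≤ P ∧ ∀ j : ℕ, cfTerm ξ (N + j + P) = cfTerm ξ (N + j)

/-- `s` is the (minimal) period of the eventually periodic regular continued fraction
expansion of `ξ`; it is well defined up to cyclic permutation. -/
def IsCFPeriod (s : List ℤ) (ξ : ℝ) : Prop :=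
  s ≠ [] ∧
  (∃ N : ℕ, ∀ j : ℕ, cfTerm ξ (N + j) = s.getD (j % s.length) 0) ∧
  (∀ P : ℕ, 1 ≤ P → (∃ N : ℕ, IsEventuallyPeriodicCF ξ N P) → s.length ≤ P)

/-- The value of the binary quadratic form `f = (m, n, k)`, i.e. `m*x^2 + n*y^2 + k*x*y`. -/
def qval (f : ℤ × ℤ × ℤ) (x y : ℤ) : ℤ := f.1 * x ^ 2 + f.2.1 * y ^ 2 + f.2.2 * x * y

/-- The discriminant `k^2 - 4*m*n` of the form `f = (m, n, k)`. -/
def formDisc (f : ℤ × ℤ × ℤ) : ℤ := f.2.2 ^ 2 - 4 * f.1 * f.2.1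

/-- `SL(2,ℤ)`-equivalence of binary quadratic forms. -/
def SLEquiv (f g : ℤ × ℤ × ℤ) : Prop :=
  ∃ a b c d : ℤ, a * d - b * c = 1 ∧
    ∀ x y : ℤ, qval g x y = qval f (a * x + b * y) (c * x + d * y)

/-- The root with the plus sign of `m*ξ^2 + k*ξ + n = 0`, for `f = (m, n, k)`. -/
noncomputable def xiPlus (f : ℤ × ℤ × ℤ) : ℝ :=
  (-(f.2.2 : ℝ) + Real.sqrt ((formDisc f : ℤ) : ℝ)) / (2 * (f.1 : ℝ))

/-- The root with the minus sign of `m*ξ^2 + k*ξ + n = 0`, for `f = (m, n, k)`. -/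
noncomputable def xiMinus (f : ℤ × ℤ × ℤ) : ℝ :=
  (-(f.2.2 : ℝ) - Real.sqrt ((formDisc f : ℤ) : ℝ)) / (2 * (f.1 : ℝ))

/-- The conjugate `(m, n, -k)` of the form `(m, n, k)`. -/
def conjF (f : ℤ × ℤ × ℤ) : ℤ × ℤ × ℤ := (f.1, f.2.1, -f.2.2)

/-- The adjoint `(-n, -m, k)` of the form `(m, n, k)`. -/
def adjF (f : ℤ × ℤ × ℤ) : ℤ × ℤ × ℤ := (-f.2.1, -f.1, f.2.2)

/-- The antipodal `(-n, -m, -k)` of the form `(m, n, k)`. -/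
def antipF (f : ℤ × ℤ × ℤ) : ℤ × ℤ × ℤ := (-f.2.1, -f.1, -f.2.2)

/-- A form `(m, n, k)` is primitive if `gcd(m, n, k) = 1`. -/
def IsPrimitiveForm (f : ℤ × ℤ × ℤ) : Prop := Int.gcd f.1 (Int.gcd f.2.1 f.2.2) = 1

/-- A period: a nonempty finite sequence of positive integers which is not the
concatenation of several copies of a shorter block. -/
def IsPeriodWord (s : List ℤ) : Prop :=
  s ≠ [] ∧ (∀ a ∈ s, 0 < a) ∧
  ∀ (t : List ℤ) (j : ℕ), 2 ≤ j → s ≠ (List.replicate j t).flatten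

/-!
A primitive form `(m, n, k)` is determined by an irrational root of `m ξ² + k ξ + n` together with
the sign of the derivative there, and an integral Moebius map of determinant `±1` carrying `ξ` to
`η` turns a form with root `η` into a form with root `ξ`; the derivative is multiplied by the
determinant. Equality of periods up to rotation means that the two roots have a common complete
quotient, hence are related by such a map. Determinant `1` makes the forms equivalent, and
determinant `-1` makes one equivalent to the antipode of the other, since `-f(y, x)` is `antipF f`.

Conversely, given a word of positive integers, `x ↦ a₁ + 1/(a₂ + 1/(⋯ + 1/x))` maps the interval
`[1, a₁ + 1]` into itself and so has a fixed point, whose continued fraction repeats the word. Its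
expansion does not terminate, so it is irrational, and being fixed by an integral Moebius map it is
a root of an integral form. A word that is not a proper power has no shorter period.
-/

/-! ### Complete quotients -/

theorem gaussIter_succ (ξ : ℝ) (n : ℕ) : gaussIter ξ (n + 1) = (Int.fract (gaussIter ξ n))⁻¹ :=
  one_div _

theorem gaussIter_add (ξ : ℝ) (m n : ℕ) : gaussIter ξ (m + n) = gaussIter (gaussIter ξ m) n := by
  induction n with
  | zero => rfl
  | succ n ih => rw [← add_assoc, gaussIter_succ, gaussIter_succ, ih]

theorem cfTerm_gaussIter (ξ : ℝ) (m n : ℕ) : cfTerm (gaussIter ξ m) n = cfTerm ξ (m + n) := by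
  rw [cfTerm, cfTerm, gaussIter_add]

theorem irrational_gaussIter {ξ : ℝ} (hξ : Irrational ξ) (n : ℕ) : Irrational (gaussIter ξ n) := by
  induction n with
  | zero => exact hξ
  | succ n ih => exact gaussIter_succ ξ n ▸ (ih.sub_intCast _).inv

theorem fract_gaussIter_ne_zero {ξ : ℝ} (hξ : Irrational ξ) (n : ℕ) :
    Int.fract (gaussIter ξ n) ≠ 0 :=
  ((irrational_gaussIter hξ n).sub_intCast _).ne_zero

theorem genContFract_of_s_get? {ξ : ℝ} {n : ℕ} (h : Int.fract (gaussIter ξ n) ≠ 0) :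
    (GenContFract.of ξ).s.get? n = some ⟨1, cfTerm ξ (n + 1)⟩ := by
  induction n generalizing ξ with
  | zero =>
    rw [cfTerm, gaussIter_succ]
    exact GenContFract.of_s_head h
  | succ n ih =>
    rw [add_comm, gaussIter_add] at h
    have hstep : (Int.fract ξ)⁻¹ = gaussIter ξ 1 := (gaussIter_succ ξ 0).symm
    rw [GenContFract.of_s_succ, hstep, ih h, cfTerm_gaussIter, add_comm 1]

theorem eq_of_cfTerm_eq {ξ η : ℝ} (hξ : Irrational ξ) (hη : Irrational η)
    (h : ∀ n, cfTerm ξ n = cfTerm η n) : ξ = η := by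
  have hof : GenContFract.of ξ = GenContFract.of η := by
    refine GenContFract.ext ?_ (Stream'.Seq.ext fun n ↦ ?_)
    · rw [GenContFract.of_h_eq_floor, GenContFract.of_h_eq_floor]
      exact congrArg Int.cast (h 0)
    · rw [genContFract_of_s_get? (fract_gaussIter_ne_zero hξ n),
        genContFract_of_s_get? (fract_gaussIter_ne_zero hη n), h]
  exact tendsto_nhds_unique (hof ▸ GenContFract.of_convergence ξ) (GenContFract.of_convergence η)

theorem irrational_of_fract_gaussIter_ne_zero {ξ : ℝ} (h : ∀ n, Int.fract (gaussIter ξ n) ≠ 0) :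
    Irrational ξ := by
  rintro ⟨q, rfl⟩
  obtain ⟨n, hn⟩ := (GenContFract.terminates_iff_rat (q : ℝ)).2 ⟨q, rfl⟩
  simp [Stream'.Seq.TerminatedAt, genContFract_of_s_get? (h n)] at hn

/-! ### Integral Moebius maps -/

/-- The fractional linear map of the integer matrix `A` takes `x` to `y`. The equation is cleared of
denominators; for irrational `x` and invertible `A` the denominator `A 1 0 * x + A 1 1` is nonzero,
so no case is added there. -/
def MoebiusMaps (A : Matrix (Fin 2) (Fin 2) ℤ) (x y : ℝ) : Prop :=
  y * (A 1 0 * x + A 1 1) = A 0 0 * x + A 0 1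

namespace MoebiusMaps

variable {A B : Matrix (Fin 2) (Fin 2) ℤ} {x y z : ℝ}

theorem one (x : ℝ) : MoebiusMaps 1 x x := by simp [MoebiusMaps]

theorem mul (hB : MoebiusMaps B y z) (hA : MoebiusMaps A x y) : MoebiusMaps (B * A) x z := by
  simp only [MoebiusMaps, Matrix.mul_apply, Fin.sum_univ_two] at *
  push_cast
  linear_combination (A 1 0 * x + A 1 1) * hB + (B 0 0 - z * B 1 0) * hA

theorem adjugate (hA : MoebiusMaps A x y) : MoebiusMaps A.adjugate y x := by
  suffices x * (-A 1 0 * y + A 0 0) = A 1 1 * y + -A 0 1 by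
    simpa [MoebiusMaps, Matrix.adjugate_fin_two] using this
  unfold MoebiusMaps at hA
  linear_combination -hA

theorem intCast_add_one_div (a : ℤ) (hx : x ≠ 0) : MoebiusMaps !![a, 1; 1, 0] x (a + 1 / x) := by
  suffices (a + 1 / x) * x = a * x + 1 by simpa [MoebiusMaps] using this
  field_simp

end MoebiusMaps

theorem exists_moebiusMaps_gaussIter {ξ : ℝ} (hξ : Irrational ξ) (n : ℕ) :
    ∃ A : Matrix (Fin 2) (Fin 2) ℤ, IsUnit A.det ∧ MoebiusMaps A (gaussIter ξ n) ξ := by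
  induction n with
  | zero => exact ⟨1, by simp, .one ξ⟩
  | succ n ih =>
    obtain ⟨A, hA, hmap⟩ := ih
    have hstep := MoebiusMaps.intCast_add_one_div ⌊gaussIter ξ n⌋
      (irrational_gaussIter hξ (n + 1)).ne_zero
    rw [gaussIter_succ, one_div, inv_inv, Int.floor_add_fract, ← gaussIter_succ] at hstep
    exact ⟨_, by simpa [Matrix.det_fin_two_of] using hA, hmap.mul hstep⟩

theorem exists_moebiusMaps_of_gaussIter_eq {ξ η : ℝ} (hξ : Irrational ξ) (hη : Irrational η)
    {m n : ℕ} (h : gaussIter ξ m = gaussIter η n) :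
    ∃ A : Matrix (Fin 2) (Fin 2) ℤ, IsUnit A.det ∧ MoebiusMaps A ξ η := by
  obtain ⟨A, hA, hξA⟩ := exists_moebiusMaps_gaussIter hξ m
  obtain ⟨B, hB, hηB⟩ := exists_moebiusMaps_gaussIter hη n
  refine ⟨B * A.adjugate, ?_, hηB.mul (h ▸ hξA.adjugate)⟩
  simpa [Matrix.det_mul, Matrix.det_adjugate] using ⟨hB, hA⟩

/-! ### Content and substitution -/

section Form

variable {f g : ℤ × ℤ × ℤ} {A : Matrix (Fin 2) (Fin 2) ℤ} {ξ η : ℝ}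

/-- The content of a form, the greatest common divisor of its coefficients; `IsPrimitiveForm f`
unfolds to `formContent f = 1`. -/
def formContent (f : ℤ × ℤ × ℤ) : ℕ := Int.gcd f.1 (Int.gcd f.2.1 f.2.2)

theorem formContent_smul (e : ℤ) (f : ℤ × ℤ × ℤ) :
    formContent (e • f) = e.natAbs * formContent f := by
  simp only [formContent, Prod.smul_fst, Prod.smul_snd, smul_eq_mul, Int.gcd_def, Int.natAbs_mul,
    Int.natAbs_natCast, Nat.gcd_mul_left]

theorem exists_eq_formContent_smul (f : ℤ × ℤ × ℤ) :
    ∃ g : ℤ × ℤ × ℤ, f = (formContent f : ℤ) • g := by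
  obtain ⟨m, hm⟩ : (formContent f : ℤ) ∣ f.1 := Int.gcd_dvd_left ..
  have hnk : (formContent f : ℤ) ∣ Int.gcd f.2.1 f.2.2 := Int.gcd_dvd_right ..
  obtain ⟨n, hn⟩ := hnk.trans (Int.gcd_dvd_left ..)
  obtain ⟨k, hk⟩ := hnk.trans (Int.gcd_dvd_right ..)
  exact ⟨(m, n, k), Prod.ext hm (Prod.ext hn hk)⟩

theorem formContent_ne_zero (hf : f ≠ 0) : formContent f ≠ 0 := by
  contrapose! hf
  obtain ⟨g, hg⟩ := exists_eq_formContent_smul f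
  rw [hg, hf, Nat.cast_zero, zero_smul]

theorem exists_isPrimitiveForm_eq_smul (hf : f ≠ 0) :
    ∃ g, IsPrimitiveForm g ∧ f = (formContent f : ℤ) • g := by
  obtain ⟨g, hg⟩ := exists_eq_formContent_smul f
  have hc : formContent f = formContent f * formContent g := by
    conv_lhs => rw [hg, formContent_smul, Int.natAbs_natCast]
  exact ⟨g, (mul_eq_left₀ (formContent_ne_zero hf)).1 hc.symm, hg⟩

theorem IsPrimitiveForm.unit_smul {e : ℤ} (hf : IsPrimitiveForm f) (he : IsUnit e) :
    IsPrimitiveForm (e • f) := by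
  change formContent _ = 1
  rw [formContent_smul, Int.isUnit_iff_natAbs_eq.1 he, one_mul]
  exact hf

/-- The form obtained from `f` by the linear change of variables with matrix `A`, see
`qval_substForm`. -/
def substForm (A : Matrix (Fin 2) (Fin 2) ℤ) (f : ℤ × ℤ × ℤ) : ℤ × ℤ × ℤ :=
  (qval f (A 0 0) (A 1 0), qval f (A 0 1) (A 1 1),
    2 * f.1 * A 0 0 * A 0 1 + 2 * f.2.1 * A 1 0 * A 1 1 + f.2.2 * (A 0 0 * A 1 1 + A 0 1 * A 1 0))

theorem qval_substForm (A : Matrix (Fin 2) (Fin 2) ℤ) (f : ℤ × ℤ × ℤ) (x y : ℤ) :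
    qval (substForm A f) x y = qval f (A 0 0 * x + A 0 1 * y) (A 1 0 * x + A 1 1 * y) := by
  simp only [substForm, qval]
  ring

theorem slEquiv_substForm (hA : A.det = 1) (f : ℤ × ℤ × ℤ) : SLEquiv f (substForm A f) :=
  ⟨A 0 0, A 0 1, A 1 0, A 1 1, by rw [← hA, Matrix.det_fin_two], qval_substForm A f⟩

theorem substForm_smul (A : Matrix (Fin 2) (Fin 2) ℤ) (e : ℤ) (f : ℤ × ℤ × ℤ) :
    substForm A (e • f) = e • substForm A f := by
  ext <;> simp only [substForm, qval, Prod.smul_fst, Prod.smul_snd, smul_eq_mul] <;> ring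

theorem substForm_mul (A B : Matrix (Fin 2) (Fin 2) ℤ) (f : ℤ × ℤ × ℤ) :
    substForm (A * B) f = substForm B (substForm A f) := by
  ext <;> simp only [substForm, qval, Matrix.mul_apply, Fin.sum_univ_two] <;> ring

theorem substForm_smul_one (c : ℤ) (f : ℤ × ℤ × ℤ) : substForm (c • 1) f = c ^ 2 • f := by
  ext <;> simp [substForm, qval] <;> ring

theorem antipF_neg (f : ℤ × ℤ × ℤ) : antipF (-f) = substForm !![0, 1; 1, 0] f := by
  ext <;> simp [antipF, substForm, qval]

theorem formContent_dvd_formContent_substForm (A : Matrix (Fin 2) (Fin 2) ℤ) (f : ℤ × ℤ × ℤ) :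
    formContent f ∣ formContent (substForm A f) := by
  obtain ⟨g, hg⟩ := exists_eq_formContent_smul f
  refine ⟨formContent (substForm A g), ?_⟩
  conv_lhs => rw [hg, substForm_smul, formContent_smul, Int.natAbs_natCast]

theorem isPrimitiveForm_substForm (hf : IsPrimitiveForm f) (hA : IsUnit A.det) :
    IsPrimitiveForm (substForm A f) := by
  have hdvd := formContent_dvd_formContent_substForm A.adjugate (substForm A f)
  rw [← substForm_mul, Matrix.mul_adjugate, substForm_smul_one, Int.isUnit_sq hA, one_smul] at hdvd
  exact Nat.dvd_one.1 (hdvd.trans hf.dvd)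

namespace MoebiusMaps

theorem eval_substForm (hmap : MoebiusMaps A ξ η) (g : ℤ × ℤ × ℤ) :
    ((substForm A g).1 : ℝ) * (ξ * ξ) + (substForm A g).2.2 * ξ + (substForm A g).2.1 =
      (A 1 0 * ξ + A 1 1) ^ 2 * (g.1 * (η * η) + g.2.2 * η + g.2.1) := by
  have hb : (A 0 1 : ℝ) = η * (A 1 0 * ξ + A 1 1) - A 0 0 * ξ := eq_sub_of_add_eq' hmap.symm
  simp only [substForm, qval]
  push_cast
  rw [hb]
  ring

theorem deriv_substForm (hmap : MoebiusMaps A ξ η)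
    (hroot : (g.1 : ℝ) * (η * η) + g.2.2 * η + g.2.1 = 0) :
    2 * ((substForm A g).1 : ℝ) * ξ + (substForm A g).2.2 = A.det * (2 * g.1 * η + g.2.2) := by
  have hb : (A 0 1 : ℝ) = η * (A 1 0 * ξ + A 1 1) - A 0 0 * ξ := eq_sub_of_add_eq' hmap.symm
  simp only [substForm, qval, Matrix.det_fin_two]
  push_cast
  rw [hb]
  linear_combination 2 * A 1 0 * (A 1 0 * ξ + A 1 1) * hroot

end MoebiusMaps

/-! ### Ascending roots -/

/-- `ξ` is an irrational root of `m x² + k x + n` at which the derivative is positive, where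
`f = (m, n, k)`. For a form of positive nonsquare discriminant this singles out `xiPlus f`, without
a division or a square root. -/
def IsAscendingRoot (f : ℤ × ℤ × ℤ) (ξ : ℝ) : Prop :=
  Irrational ξ ∧ (f.1 : ℝ) * (ξ * ξ) + f.2.2 * ξ + f.2.1 = 0 ∧ 0 < 2 * (f.1 : ℝ) * ξ + f.2.2

theorem eq_zero_of_intCast_mul_add_eq_zero (hξ : Irrational ξ) {a b : ℤ}
    (h : (a : ℝ) * ξ + b = 0) : a = 0 ∧ b = 0 := by
  obtain rfl : a = 0 := by
    by_contra ha
    exact ((hξ.intCast_mul ha).add_intCast b).ne_zero h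
  exact ⟨rfl, by simpa using h⟩

theorem intCast_formDisc (f : ℤ × ℤ × ℤ) : (formDisc f : ℝ) = discrim (f.1 : ℝ) f.2.2 f.2.1 := by
  simp [formDisc, discrim]

theorem fst_ne_zero_of_not_isSquare_formDisc (hf : ¬IsSquare (formDisc f)) : f.1 ≠ 0 :=
  fun h ↦ hf ⟨f.2.2, by rw [formDisc, h]; ring⟩

theorem isAscendingRoot_xiPlus (hpos : 0 < formDisc f) (hsq : ¬IsSquare (formDisc f)) :
    IsAscendingRoot f (xiPlus f) := by
  have hm : (f.1 : ℝ) ≠ 0 := Int.cast_ne_zero.2 (fst_ne_zero_of_not_isSquare_formDisc hsq)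
  have hD : (0 : ℝ) < formDisc f := Int.cast_pos.2 hpos
  have hderiv : 2 * (f.1 : ℝ) * xiPlus f + f.2.2 = √(formDisc f) := by
    rw [xiPlus]
    field_simp
    ring
  refine ⟨?_, ?_, hderiv ▸ Real.sqrt_pos.2 hD⟩
  · have hirr : Irrational √(formDisc f) := irrational_sqrt_intCast_iff.2 ⟨hsq, hpos.le⟩
    exact .of_intCast_mul (2 * f.1) (.of_add_intCast f.2.2 (by push_cast; rwa [hderiv]))
  · have hs : discrim (f.1 : ℝ) f.2.2 f.2.1 = √(formDisc f) * √(formDisc f) := by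
      rw [Real.mul_self_sqrt hD.le, intCast_formDisc]
    exact (quadratic_eq_zero_iff hm hs _).2 (.inl rfl)

namespace IsAscendingRoot

theorem fst_ne_zero (hf : IsAscendingRoot f ξ) : f.1 ≠ 0 := by
  obtain ⟨hirr, hroot, hderiv⟩ := hf
  intro hm
  obtain ⟨hk, -⟩ := eq_zero_of_intCast_mul_add_eq_zero hirr (by simpa [hm] using hroot)
  simp [hm, hk] at hderiv

theorem sqrt_formDisc (hf : IsAscendingRoot f ξ) : √(formDisc f) = 2 * f.1 * ξ + f.2.2 := by
  rw [intCast_formDisc, discrim_eq_sq_of_quadratic_eq_zero hf.2.1, Real.sqrt_sq hf.2.2.le]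

theorem formDisc_pos (hf : IsAscendingRoot f ξ) : 0 < formDisc f :=
  Int.cast_pos.1 (Real.sqrt_pos.1 (hf.sqrt_formDisc ▸ hf.2.2))

theorem not_isSquare_formDisc (hf : IsAscendingRoot f ξ) : ¬IsSquare (formDisc f) := by
  refine (irrational_sqrt_intCast_iff.1 ?_).1
  rw [hf.sqrt_formDisc]
  exact_mod_cast (hf.1.intCast_mul (mul_ne_zero two_ne_zero hf.fst_ne_zero)).add_intCast f.2.2

theorem xiPlus_eq (hf : IsAscendingRoot f ξ) : xiPlus f = ξ := by
  have hm : (f.1 : ℝ) ≠ 0 := Int.cast_ne_zero.2 hf.fst_ne_zero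
  rw [xiPlus, hf.sqrt_formDisc]
  field_simp
  ring

theorem eq_of_isPrimitiveForm (hf : IsAscendingRoot f ξ) (hg : IsAscendingRoot g ξ)
    (pf : IsPrimitiveForm f) (pg : IsPrimitiveForm g) : f = g := by
  have hprop : g.1 • f = f.1 • g := by
    obtain ⟨hk, hn⟩ := eq_zero_of_intCast_mul_add_eq_zero hf.1
      (a := g.1 * f.2.2 - f.1 * g.2.2) (b := g.1 * f.2.1 - f.1 * g.2.1)
      (by push_cast; linear_combination g.1 * hf.2.1 - f.1 * hg.2.1)
    exact Prod.ext (mul_comm ..) (Prod.ext (sub_eq_zero.1 hn) (sub_eq_zero.1 hk))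
  have habs : g.1.natAbs = f.1.natAbs := by
    have hc := congrArg formContent hprop
    rwa [formContent_smul, formContent_smul, show formContent f = 1 from pf,
      show formContent g = 1 from pg, mul_one, mul_one] at hc
  rcases Int.natAbs_eq_natAbs_iff.1 habs with h | h
  · exact smul_right_injective _ hf.fst_ne_zero (h ▸ hprop)
  · obtain rfl : g = -f :=
      smul_right_injective _ hf.fst_ne_zero (hprop.symm.trans (by simp [h]))
    have hneg : 0 < -(2 * (f.1 : ℝ) * ξ + f.2.2) := by simpa [add_comm] using hg.2.2
    exact absurd hf.2.2 (neg_pos.1 hneg).not_gt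

theorem det_smul_substForm (hg : IsAscendingRoot g η) (hA : IsUnit A.det) (hξ : Irrational ξ)
    (hmap : MoebiusMaps A ξ η) : IsAscendingRoot (A.det • substForm A g) ξ := by
  obtain ⟨-, hroot, hderiv⟩ := hg
  have hdet : (A.det : ℝ) * A.det = 1 := by exact_mod_cast Int.isUnit_mul_self hA
  have hroot' := hmap.eval_substForm g
  have hderiv' := hmap.deriv_substForm hroot
  refine ⟨hξ, ?_, ?_⟩ <;> simp only [Prod.smul_fst, Prod.smul_snd, smul_eq_mul, Int.cast_mul]
  · linear_combination A.det * hroot' + A.det * (A 1 0 * ξ + A 1 1) ^ 2 * hroot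
  · convert hderiv using 1
    linear_combination A.det * hderiv' + (2 * g.1 * η + g.2.2) * hdet

theorem slEquiv_or_slEquiv_antipF (hf : IsAscendingRoot f ξ) (hg : IsAscendingRoot g η)
    (pf : IsPrimitiveForm f) (pg : IsPrimitiveForm g) (hA : IsUnit A.det)
    (hmap : MoebiusMaps A ξ η) : SLEquiv g f ∨ SLEquiv g (antipF f) := by
  have hfg : f = A.det • substForm A g :=
    hf.eq_of_isPrimitiveForm (hg.det_smul_substForm hA hf.1 hmap) pf
      ((isPrimitiveForm_substForm pg hA).unit_smul hA)
  rcases Int.isUnit_iff.1 hA with hdet | hdet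
  · left
    rw [hfg, hdet, one_smul]
    exact slEquiv_substForm hdet g
  · right
    rw [hfg, hdet, neg_one_smul, antipF_neg, ← substForm_mul]
    exact slEquiv_substForm (by simp [Matrix.det_mul, hdet, Matrix.det_fin_two_of]) g

end IsAscendingRoot

theorem deriv_ne_zero_of_irrational (hξ : Irrational ξ) (hf : f ≠ 0)
    (hroot : (f.1 : ℝ) * (ξ * ξ) + f.2.2 * ξ + f.2.1 = 0) : 2 * (f.1 : ℝ) * ξ + f.2.2 ≠ 0 := by
  contrapose! hf
  obtain ⟨hm, hk⟩ := eq_zero_of_intCast_mul_add_eq_zero hξ (a := 2 * f.1) (by exact_mod_cast hf)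
  have hm : f.1 = 0 := by simpa using hm
  have hn : f.2.1 = 0 := by simpa [hm, hk] using hroot
  exact Prod.ext hm (Prod.ext hn hk)

theorem exists_isPrimitiveForm_isAscendingRoot (hξ : Irrational ξ) (hf : f ≠ 0)
    (hroot : (f.1 : ℝ) * (ξ * ξ) + f.2.2 * ξ + f.2.1 = 0) :
    ∃ g, IsPrimitiveForm g ∧ IsAscendingRoot g ξ := by
  obtain ⟨g, pg, hg⟩ := exists_isPrimitiveForm_eq_smul hf
  have hc : (formContent f : ℝ) ≠ 0 := Nat.cast_ne_zero.2 (formContent_ne_zero hf)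
  have hroot' : (g.1 : ℝ) * (ξ * ξ) + g.2.2 * ξ + g.2.1 = 0 := by
    refine (mul_eq_zero.1 ?_).resolve_left hc
    rw [hg] at hroot
    simp only [Prod.smul_fst, Prod.smul_snd, smul_eq_mul, Int.cast_mul, Int.cast_natCast] at hroot
    linear_combination hroot
  have hg0 : g ≠ 0 := by
    rintro rfl
    exact hf (hg.trans (smul_zero _))
  rcases (deriv_ne_zero_of_irrational hξ hg0 hroot').lt_or_gt with hneg | hpos
  · refine ⟨(-1 : ℤ) • g, pg.unit_smul (by simp), hξ, ?_, ?_⟩ <;>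
      simp only [Prod.smul_fst, Prod.smul_snd, smul_eq_mul, Int.cast_mul, Int.cast_neg,
        Int.cast_one]
    · linear_combination -hroot'
    · linarith
  · exact ⟨g, pg, hξ, hroot', hpos⟩

end Form

/-! ### Period words -/

theorem IsCFPeriod.exists_gaussIter_eq {s t : List ℤ} {ξ η : ℝ} (hs : IsCFPeriod s ξ)
    (ht : IsCFPeriod t η) (hst : s ~r t) (hξ : Irrational ξ) (hη : Irrational η) :
    ∃ m n, gaussIter ξ m = gaussIter η n := by
  obtain ⟨hne, ⟨M, hM⟩, -⟩ := hs
  obtain ⟨-, ⟨N, hN⟩, -⟩ := ht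
  obtain ⟨r, rfl⟩ := hst
  refine ⟨M + r, N, eq_of_cfTerm_eq (irrational_gaussIter hξ _) (irrational_gaussIter hη _) ?_⟩
  intro j
  have hj : j % s.length < s.length := Nat.mod_lt _ (List.length_pos_iff.2 hne)
  rw [cfTerm_gaussIter, cfTerm_gaussIter, add_assoc, hM, hN, List.length_rotate,
    List.getD_eq_getElem?_getD, List.getD_eq_getElem?_getD, List.getElem?_rotate hj,
    Nat.mod_add_mod, add_comm r]

theorem eq_flatten_replicate_of_append_comm {α : Type*} {u v : List α} {k : ℕ}
    (hlen : v.length = k * u.length) (h : u ++ v = v ++ u) : v = (List.replicate k u).flatten := by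
  induction k generalizing v with
  | zero => simpa using hlen
  | succ k ih =>
    have hle : u.length ≤ v.length := hlen ▸ Nat.le_mul_of_pos_left _ k.succ_pos
    obtain ⟨w, rfl⟩ : u <+: v :=
      List.prefix_of_prefix_length_le (h ▸ List.prefix_append u v) (List.prefix_append v u) hle
    rw [List.append_assoc, List.append_cancel_left_eq] at h
    rw [List.length_append, Nat.succ_mul, add_comm, add_left_inj] at hlen
    rw [List.replicate_succ, List.flatten_cons, ← ih hlen h]

theorem rotate_gcd_eq_self {α : Type*} {s : List α} {m n : ℕ} (hm : s.rotate m = s)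
    (hn : s.rotate n = s) : s.rotate (m.gcd n) = s := by
  have hiter : ∀ j, (fun l : List α ↦ l.rotate 1)^[j] s = s.rotate j := by
    intro j
    induction j with
    | zero => simp
    | succ j ih => rw [Function.iterate_succ_apply', ih, List.rotate_rotate]
  rw [← hiter]
  exact Function.IsPeriodicPt.gcd ((hiter m).trans hm) ((hiter n).trans hn)

theorem eq_flatten_replicate_take_of_rotate_eq {α : Type*} {s : List α} {d k : ℕ}
    (hlen : s.length = k * d) (hd : d ≤ s.length) (h : s.rotate d = s) :
    s = (List.replicate k (s.take d)).flatten := by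
  refine eq_flatten_replicate_of_append_comm (by rwa [List.length_take_of_le hd]) ?_
  rw [List.rotate_eq_drop_append_take hd] at h
  calc s.take d ++ s = s.take d ++ (s.drop d ++ s.take d) := by rw [h]
    _ = s ++ s.take d := by rw [← List.append_assoc, List.take_append_drop]

namespace IsPeriodWord

variable {s : List ℤ}

theorem length_dvd_of_rotate_eq (hs : IsPeriodWord s) {n : ℕ} (h : s.rotate n = s) :
    s.length ∣ n := by
  obtain ⟨hne, -, hprim⟩ := hs
  have hpos : 0 < s.length := List.length_pos_iff.2 hne
  obtain ⟨k, hk⟩ := Nat.gcd_dvd_right n s.length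
  have hpow := eq_flatten_replicate_take_of_rotate_eq (hk.trans (mul_comm ..))
    (Nat.gcd_le_right n hpos) (rotate_gcd_eq_self h s.rotate_length)
  obtain rfl : k = 1 := by
    have hk2 : ¬2 ≤ k := fun hk2 ↦ hprim _ k hk2 hpow
    have hk0 : k ≠ 0 := by
      rintro rfl
      exact hpos.ne' hk
    omega
  rw [hk, mul_one]
  exact Nat.gcd_dvd_left ..

theorem isCFPeriod (hs : IsPeriodWord s) {ξ : ℝ} {M : ℕ}
    (h : ∀ j, cfTerm ξ (M + j) = s.getD (j % s.length) 0) : IsCFPeriod s ξ := by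
  refine ⟨hs.1, ⟨M, h⟩, fun P hP ⟨N, _, hN⟩ ↦ ?_⟩
  suffices hrot : s.rotate P = s by exact Nat.le_of_dvd hP (hs.length_dvd_of_rotate_eq hrot)
  have hpos : 0 < s.length := List.length_pos_iff.2 hs.1
  refine List.rotate_injective N (List.ext_getElem (by simp) fun i hi hi' ↦ ?_)
  have hterm := hN (M + i)
  rw [show N + (M + i) + P = M + (i + (P + N)) by ring, show N + (M + i) = M + (i + N) by ring,
    h, h] at hterm
  simpa [List.getElem_rotate, List.rotate_rotate, Nat.mod_lt _ hpos] using hterm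

end IsPeriodWord

/-! ### Purely periodic continued fractions -/

/-- The finite continued fraction `a₁ + 1/(a₂ + 1/(⋯ + 1/(aₚ + 1/x)))` of the word
`s = [a₁, …, aₚ]` with last complete quotient `x`. -/
noncomputable def cfFold (s : List ℤ) (x : ℝ) : ℝ := s.foldr (fun (a : ℤ) (y : ℝ) ↦ a + 1 / y) x

/-- The matrix of the Moebius map `cfFold s`. -/
def cfMatrix (s : List ℤ) : Matrix (Fin 2) (Fin 2) ℤ := (s.map fun a ↦ !![a, 1; 1, 0]).prod

section cfFold

variable {s l : List ℤ} {a : ℤ} {x : ℝ}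

theorem cfFold_cons (a : ℤ) (l : List ℤ) (x : ℝ) : cfFold (a :: l) x = a + 1 / cfFold l x := rfl

theorem one_le_cfFold (hs : ∀ a ∈ s, 0 < a) (hx : 1 ≤ x) : 1 ≤ cfFold s x := by
  induction s with
  | nil => exact hx
  | cons a l ih =>
    rw [List.forall_mem_cons] at hs
    have ha : (1 : ℝ) ≤ a := Int.cast_one_le_of_pos hs.1
    have hl := ih hs.2
    rw [cfFold_cons]
    exact le_add_of_le_of_nonneg ha (by positivity)

theorem one_lt_cfFold (hs : ∀ a ∈ s, 0 < a) (hne : s ≠ []) (hx : 1 ≤ x) : 1 < cfFold s x := by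
  obtain ⟨a, l, rfl⟩ := List.exists_cons_of_ne_nil hne
  rw [List.forall_mem_cons] at hs
  have ha : (1 : ℝ) ≤ a := Int.cast_one_le_of_pos hs.1
  have hl := one_le_cfFold hs.2 hx
  rw [cfFold_cons]
  exact lt_add_of_le_of_pos ha (by positivity)

theorem continuousOn_cfFold (hs : ∀ a ∈ s, 0 < a) : ContinuousOn (cfFold s) (Set.Ici 1) := by
  induction s with
  | nil => exact continuousOn_id
  | cons a l ih =>
    rw [List.forall_mem_cons] at hs
    refine continuousOn_const.add (continuousOn_const.div (ih hs.2) fun x hx ↦ ?_)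
    exact (zero_lt_one.trans_le (one_le_cfFold hs.2 hx)).ne'

theorem exists_isFixedPt_cfFold (hs : ∀ a ∈ s, 0 < a) (hne : s ≠ []) :
    ∃ ξ, 1 ≤ ξ ∧ Function.IsFixedPt (cfFold s) ξ := by
  obtain ⟨a, l, rfl⟩ := List.exists_cons_of_ne_nil hne
  obtain ⟨ha, hl⟩ := List.forall_mem_cons.1 hs
  have ha' : (0 : ℝ) < a := Int.cast_pos.2 ha
  have hmaps : Set.MapsTo (cfFold (a :: l)) (Set.Icc 1 (a + 1)) (Set.Icc 1 (a + 1)) := by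
    intro x hx
    have hlx := one_le_cfFold hl hx.1
    refine ⟨one_le_cfFold hs hx.1, ?_⟩
    rw [cfFold_cons]
    gcongr
    exact div_le_one_of_le₀ hlx (zero_le_one.trans hlx)
  obtain ⟨ξ, hξ, hfix⟩ := exists_mem_Icc_isFixedPt_of_mapsTo
    ((continuousOn_cfFold hs).mono Set.Icc_subset_Ici_self) (by linarith) hmaps
  exact ⟨ξ, hξ.1, hfix⟩

theorem isFixedPt_cfFold_rotate_one (h : Function.IsFixedPt (cfFold (a :: l)) x) :
    Function.IsFixedPt (cfFold ((a :: l).rotate 1)) (cfFold l x) := by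
  rw [List.rotate_cons_succ, List.rotate_zero, Function.IsFixedPt, cfFold, List.foldr_append]
  exact congrArg (cfFold l) h

theorem cfMatrix_cons (a : ℤ) (l : List ℤ) : cfMatrix (a :: l) = !![a, 1; 1, 0] * cfMatrix l :=
  List.prod_cons

theorem moebiusMaps_cfMatrix (hs : ∀ a ∈ s, 0 < a) (hx : 1 ≤ x) :
    MoebiusMaps (cfMatrix s) x (cfFold s x) := by
  induction s with
  | nil => exact .one x
  | cons a l ih =>
    rw [List.forall_mem_cons] at hs
    have hl : cfFold l x ≠ 0 := (zero_lt_one.trans_le (one_le_cfFold hs.2 hx)).ne'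
    rw [cfMatrix_cons, cfFold_cons]
    exact (MoebiusMaps.intCast_add_one_div a hl).mul (ih hs.2)

theorem cfMatrix_firstCol (hs : ∀ a ∈ s, 0 < a) : 0 < cfMatrix s 0 0 ∧ 0 ≤ cfMatrix s 1 0 := by
  induction s with
  | nil => simp [cfMatrix]
  | cons a l ih =>
    rw [List.forall_mem_cons] at hs
    have ha := hs.1
    obtain ⟨h0, h1⟩ := ih hs.2
    suffices 0 < a * cfMatrix l 0 0 + cfMatrix l 1 0 ∧ 0 ≤ cfMatrix l 0 0 by
      simpa [cfMatrix_cons, Matrix.mul_apply] using this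
    exact ⟨by positivity, h0.le⟩

theorem cfMatrix_one_zero_pos (hs : ∀ a ∈ s, 0 < a) (hne : s ≠ []) : 0 < cfMatrix s 1 0 := by
  obtain ⟨a, l, rfl⟩ := List.exists_cons_of_ne_nil hne
  simpa [cfMatrix_cons, Matrix.mul_apply]
    using (cfMatrix_firstCol (List.forall_mem_cons.1 hs).2).1

end cfFold

/-- `x` is the value of the purely periodic continued fraction in which the word `s` of positive
integers repeats forever, expressed by the fixed point equation of `cfFold s`. The bound `1 ≤ x`
excludes the other fixed point, which is negative. -/
structure IsCFCycle (s : List ℤ) (x : ℝ) : Prop where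
  pos : ∀ a ∈ s, 0 < a
  ne_nil : s ≠ []
  one_le : 1 ≤ x
  isFixedPt : Function.IsFixedPt (cfFold s) x

namespace IsCFCycle

variable {s l : List ℤ} {a : ℤ} {x : ℝ}

theorem one_lt (h : IsCFCycle s x) : 1 < x :=
  h.isFixedPt.eq ▸ one_lt_cfFold h.pos h.ne_nil h.one_le

theorem cfFold_tail (h : IsCFCycle (a :: l) x) :
    IsCFCycle ((a :: l).rotate 1) (cfFold l x) where
  pos := by simpa only [List.mem_rotate] using h.pos
  ne_nil := mt List.rotate_eq_nil_iff.1 h.ne_nil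
  one_le := one_le_cfFold (List.forall_mem_cons.1 h.pos).2 h.one_le
  isFixedPt := isFixedPt_cfFold_rotate_one h.isFixedPt

theorem floor_eq (h : IsCFCycle (a :: l) x) : ⌊x⌋ = a := by
  have hl := h.cfFold_tail.one_lt
  rw [← h.isFixedPt.eq, cfFold_cons, Int.floor_intCast_add, Int.floor_eq_zero_iff.2, add_zero]
  exact ⟨by positivity, (div_lt_one (by positivity)).2 hl⟩

theorem fract_eq (h : IsCFCycle (a :: l) x) : Int.fract x = (cfFold l x)⁻¹ := by
  rw [Int.fract, h.floor_eq, sub_eq_iff_eq_add', ← one_div]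
  exact h.isFixedPt.eq.symm

theorem head?_eq (h : IsCFCycle s x) : s.head? = some ⌊x⌋ := by
  obtain ⟨a, l, rfl⟩ := List.exists_cons_of_ne_nil h.ne_nil
  rw [h.floor_eq, List.head?_cons]

theorem inv_fract (h : IsCFCycle s x) : IsCFCycle (s.rotate 1) (Int.fract x)⁻¹ := by
  obtain ⟨a, l, rfl⟩ := List.exists_cons_of_ne_nil h.ne_nil
  rw [h.fract_eq, inv_inv]
  exact h.cfFold_tail

theorem gaussIter (h : IsCFCycle s x) (n : ℕ) : IsCFCycle (s.rotate n) (gaussIter x n) := by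
  induction n with
  | zero => rwa [List.rotate_zero]
  | succ n ih =>
    rw [gaussIter_succ, ← List.rotate_rotate]
    exact ih.inv_fract

theorem cfTerm_eq (h : IsCFCycle s x) (n : ℕ) : cfTerm x n = s.getD (n % s.length) 0 := by
  have hlt : n % s.length < s.length := Nat.mod_lt n (List.length_pos_iff.2 h.ne_nil)
  rw [List.getD_eq_getElem?_getD, ← List.head?_rotate hlt, List.rotate_mod,
    (h.gaussIter n).head?_eq, Option.getD_some, cfTerm]

theorem irrational (h : IsCFCycle s x) : Irrational x :=
  irrational_of_fract_gaussIter_ne_zero fun n ↦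
    (inv_pos.1 (zero_lt_one.trans (h.gaussIter n).inv_fract.one_lt)).ne'

theorem exists_isPrimitiveForm (h : IsCFCycle s x) :
    ∃ f, IsPrimitiveForm f ∧ IsAscendingRoot f x := by
  have hmap : MoebiusMaps (cfMatrix s) x x := by
    simpa only [h.isFixedPt.eq] using moebiusMaps_cfMatrix h.pos h.one_le
  refine exists_isPrimitiveForm_isAscendingRoot h.irrational
    (f := (cfMatrix s 1 0, -cfMatrix s 0 1, cfMatrix s 1 1 - cfMatrix s 0 0)) ?_ ?_
  · exact fun h0 ↦ (cfMatrix_one_zero_pos h.pos h.ne_nil).ne' (congrArg Prod.fst h0)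
  · unfold MoebiusMaps at hmap
    push_cast
    linear_combination hmap

end IsCFCycle

theorem IsPeriodWord.exists_isCFCycle {s : List ℤ} (hs : IsPeriodWord s) : ∃ ξ, IsCFCycle s ξ := by
  obtain ⟨ξ, hξ, hfix⟩ := exists_isFixedPt_cfFold hs.2.1 hs.1
  exact ⟨ξ, hs.2.1, hs.1, hξ, hfix⟩

/-- Any period `s` defines a class of forms with `Γ(f) = s`, uniquely up to the
antipodal involution (among primitive classes). -/
theorem statement2 (s : List ℤ) (hs : IsPeriodWord s) :
    (∃ f : ℤ × ℤ × ℤ, IsPrimitiveForm f ∧ 0 < formDisc f ∧ ¬ IsSquare (formDisc f) ∧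
      IsCFPeriod s (xiPlus f)) ∧
    (∀ f g : ℤ × ℤ × ℤ, IsPrimitiveForm f → IsPrimitiveForm g →
      0 < formDisc f → ¬ IsSquare (formDisc f) →
      0 < formDisc g → ¬ IsSquare (formDisc g) →
      ∀ sf sg : List ℤ, IsCFPeriod sf (xiPlus f) → IsCFPeriod sg (xiPlus g) →
        List.IsRotated sf sg → (SLEquiv g f ∨ SLEquiv g (antipF f))) := by
  constructor
  · obtain ⟨ξ, hξ⟩ := hs.exists_isCFCycle
    obtain ⟨f, pf, hf⟩ := hξ.exists_isPrimitiveForm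
    refine ⟨f, pf, hf.formDisc_pos, hf.not_isSquare_formDisc, hs.isCFPeriod (M := 0) fun j ↦ ?_⟩
    rw [hf.xiPlus_eq, zero_add, hξ.cfTerm_eq]
  · intro f g pf pg hf hf' hg hg' sf sg hsf hsg hrot
    have hξ := isAscendingRoot_xiPlus hf hf'
    have hη := isAscendingRoot_xiPlus hg hg'
    obtain ⟨m, n, htail⟩ := hsf.exists_gaussIter_eq hsg hrot hξ.1 hη.1
    obtain ⟨A, hA, hmap⟩ := exists_moebiusMaps_of_gaussIter_eq hξ.1 hη.1 htail
    exact hξ.slEquiv_or_slEquiv_antipF hη pf pg hA hmap
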